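/- The rules ∼p ← q. and ∼q ← p. have exactly the same HT-models but different RE-models, that is, Mod_HT(∼p ← q.) = Mod_HT(∼q ← p.) while Mod_RE(∼p ← q.) ≠ Mod_RE(∼q ← p.). -/

import Mathlib

/-!
A pair `⟨I, J⟩` is an RE-model of `∼a ← b.` iff `a ∈ J → b ∉ I`, and `J` satisfies the rule iff
`b ∉ J` or `a ∉ J`. The latter condition is symmetric in `a` and `b`, and for `I ⊆ J` it implies the
former, so it alone characterises the HT-models. The RE-condition by itself is not symmetric:
`⟨{q}, {p, q}⟩` is an RE-model of `∼q ← p.` but not of `∼p ← q.`.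
-/

inductive Lit (α : Type) where
  | pos : α → Lit α
  | neg : α → Lit α

structure Rule (α : Type) where
  head : Set (Lit α)
  body : Set (Lit α)

def litSat {α : Type} (J : Set α) : Lit α → Prop
  | .pos a => a ∈ J
  | .neg a => a ∉ J

def ruleSat {α : Type} (J : Set α) (π : Rule α) : Prop :=
  (∃ L ∈ π.body, ¬ litSat J L) ∨ (∃ L ∈ π.head, litSat J L)

def progSat {α : Type} (J : Set α) (P : Set (Rule α)) : Prop :=
  ∀ π ∈ P, ruleSat J π

/-- A rule is kept in the reduct w.r.t. `J` iff `J` does not satisfy the rule `(∼H⁻, ∼B⁻)`. -/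
def kept {α : Type} (J : Set α) (π : Rule α) : Prop :=
  (∀ a : α, Lit.neg a ∈ π.body → a ∉ J) ∧ (∀ a : α, Lit.neg a ∈ π.head → a ∈ J)

/-- The positive-part rule `(H⁺, B⁺)`. -/
def reductRule {α : Type} (π : Rule α) : Rule α :=
  ⟨{L ∈ π.head | ∃ a, L = Lit.pos a}, {L ∈ π.body | ∃ a, L = Lit.pos a}⟩

def reduct {α : Type} (J : Set α) (P : Set (Rule α)) : Set (Rule α) :=
  {ρ | ∃ π ∈ P, kept J π ∧ ρ = reductRule π}

/-- `J` is a stable model of `P`: a subset-minimal classical model of the reduct `P^J`. -/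
def stableModel {α : Type} (P : Set (Rule α)) (J : Set α) : Prop :=
  progSat J (reduct J P) ∧ ∀ I : Set α, progSat I (reduct J P) → ¬ I ⊂ J

/-- `⟨I, J⟩` is an RE-model of rule `π` iff `I ⊨ π^J`. -/
def reRule {α : Type} (π : Rule α) (I J : Set α) : Prop :=
  kept J π → ruleSat I (reductRule π)

/-- `⟨I, J⟩` is an HT-model of rule `π` iff `J ⊨ π` and `I ⊨ π^J`. -/
def htRule {α : Type} (π : Rule α) (I J : Set α) : Prop :=
  ruleSat J π ∧ reRule π I J

def htProg {α : Type} (P : Set (Rule α)) (I J : Set α) : Prop :=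
  ∀ π ∈ P, htRule π I J

def reProg {α : Type} (P : Set (Rule α)) (I J : Set α) : Prop :=
  ∀ π ∈ P, reRule π I J

def negLit {α : Type} : Lit α → Lit α
  | .pos a => .neg a
  | .neg a => .pos a

/-- Rules `π`, `σ` are in conflict iff `head π ≠ ∅` and `head π = ∼ head σ`. -/
def conflict {α : Type} (π σ : Rule α) : Prop :=
  π.head ≠ ∅ ∧ π.head = negLit '' σ.head

def bodySat {α : Type} (J : Set α) (σ : Rule α) : Prop :=
  ∀ L ∈ σ.body, litSat J L

theorem reRule_neg_pos {α : Type} (a b : α) (I J : Set α) :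
    reRule ⟨{Lit.neg a}, {Lit.pos b}⟩ I J ↔ (a ∈ J → b ∉ I) := by
  simp [reRule, kept, ruleSat, reductRule, litSat]

theorem ruleSat_neg_pos {α : Type} (a b : α) (J : Set α) :
    ruleSat J ⟨{Lit.neg a}, {Lit.pos b}⟩ ↔ (b ∉ J ∨ a ∉ J) := by
  simp [ruleSat, litSat]

theorem htRule_neg_pos {α : Type} (a b : α) {I J : Set α} (h : I ⊆ J) :
    htRule ⟨{Lit.neg a}, {Lit.pos b}⟩ I J ↔ (b ∉ J ∨ a ∉ J) := by
  rw [htRule, ruleSat_neg_pos, reRule_neg_pos]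
  have hb : b ∈ I → b ∈ J := fun hb => h hb
  tauto

/-- The rules `∼p ← q.` and `∼q ← p.` have exactly the same HT-models,
but different RE-models. -/
theorem stmt12 {α : Type} (p q : α) (hpq : p ≠ q) :
    (∀ I J : Set α, I ⊆ J →
      (htRule ⟨{Lit.neg p}, {Lit.pos q}⟩ I J ↔ htRule ⟨{Lit.neg q}, {Lit.pos p}⟩ I J)) ∧
    ¬ (∀ I J : Set α, I ⊆ J →
      (reRule ⟨{Lit.neg p}, {Lit.pos q}⟩ I J ↔ reRule ⟨{Lit.neg q}, {Lit.pos p}⟩ I J)) := by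
  refine ⟨fun I J h => ?_, fun h => ?_⟩
  · rw [htRule_neg_pos p q h, htRule_neg_pos q p h, or_comm]
  · have h' := h {q} {p, q} (by simp)
    rw [reRule_neg_pos, reRule_neg_pos] at h'
    simp [hpq] at h'
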